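/- (Linear convergence when θ = 1/2.) Assume Assumptions RS and QM, and let (y_t)_{t∈ℕ} be the mode estimate sequence obtained by the MS iteration starting from y₁ with f(y₁) > 0. Assume that for some τ ∈ ℕ, with S := closure of the convex hull of {y_t : t ≥ τ}: the KDE f is differentiable on S with Lipschitz-continuous gradient on S, and f has the Łojasiewicz property on S; and that y_t converges to ȳ and f satisfies the Łojasiewicz inequality at ȳ with exponent θ = 1/2, i.e. there are ε > 0, c > 0 such that ‖∇f(y)‖ ≥ c·(f(ȳ) − f(y))^{1/2} for all y ∈ S with ‖ȳ − y‖ < ε and f(ȳ) − f(y) ≥ 0. Then there exist constants C > 0 and q ∈ (0,1) such that ‖ȳ − y_t‖ ≤ C·q^t and f(ȳ) − f(y_t) ≤ C·q^{2t} for all t ∈ ℕ. -/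

import Mathlib

open Set Filter Topology MeasureTheory
open scoped BigOperators RealInnerProductSpace

noncomputable section

/-- Euclidean space `ℝ^d`. -/
abbrev Euc (d : ℕ) := EuclideanSpace ℝ (Fin d)

/-- The convex subdifferential of a function `g` (viewed as a function on `[0,∞)`) at `u`. -/
def subdiffIci (g : ℝ → ℝ) (u : ℝ) : Set ℝ :=
  {c : ℝ | ∀ v ∈ Set.Ici (0:ℝ), g v - g u ≥ c * (v - u)}

/-- Assumption RS: the kernel `K` is bounded, continuous, non-negative, normalized, and
radially symmetric with profile `Khat`. -/
structure AssumptionRS (d : ℕ) (K : Euc d → ℝ) (Khat : ℝ → ℝ) : Prop where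
  bounded : ∃ M : ℝ, ∀ x, K x ≤ M
  cont : Continuous K
  nonneg : ∀ x, 0 ≤ K x
  normalized : ∫ x, K x = 1
  radial : ∀ x, K x = Khat (‖x‖ ^ 2 / 2)

/-- Assumption QM for the profile `Khat`, together with the selection `Kcheck`:
`Khat` is convex and non-increasing on `[0,∞)`, its right derivative at `0` exists as a real
number and equals `-(Kcheck 0)` (i.e. `Kcheck 0 = -Khat'(0+) > -∞`), and for every `u > 0`,
`-(Kcheck u)` belongs to the subdifferential of `Khat` at `u`. -/
structure AssumptionQM (Khat Kcheck : ℝ → ℝ) : Prop where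
  convexOn : ConvexOn ℝ (Set.Ici (0:ℝ)) Khat
  antitoneOn : AntitoneOn Khat (Set.Ici (0:ℝ))
  rderiv0 : Filter.Tendsto (fun v => (Khat v - Khat 0) / v)
      (nhdsWithin 0 (Set.Ioi 0)) (nhds (-(Kcheck 0)))
  subdiff : ∀ u : ℝ, 0 < u → -(Kcheck u) ∈ subdiffIci Khat u

/-- The kernel density estimate `f(y) = (1/(n hᵈ)) ∑ᵢ K((y - xᵢ)/h)`. -/
def KDE (d n : ℕ) (K : Euc d → ℝ) (x : Fin n → Euc d) (h : ℝ) (y : Euc d) : ℝ :=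
  (1 / ((n : ℝ) * h ^ d)) * ∑ i : Fin n, K (h⁻¹ • (y - x i))

/-- `f̌(y) = (1/(n hᵈ)) ∑ᵢ Ǩ(‖(y - xᵢ)/h‖²/2)`. -/
def fcheck (d n : ℕ) (Kcheck : ℝ → ℝ) (x : Fin n → Euc d) (h : ℝ) (y : Euc d) : ℝ :=
  (1 / ((n : ℝ) * h ^ d)) * ∑ i : Fin n, Kcheck (‖h⁻¹ • (y - x i)‖ ^ 2 / 2)

/-- The mean shift vector `m(y)`: zero if `f̌(y) = 0`, and otherwise
`m(y) = ∑ᵢ Ǩ(‖(y - xᵢ)/h‖²/2)(xᵢ - y) / ∑ᵢ Ǩ(‖(y - xᵢ)/h‖²/2)`. -/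
def msMap (d n : ℕ) (Kcheck : ℝ → ℝ) (x : Fin n → Euc d) (h : ℝ) (y : Euc d) : Euc d :=
  if fcheck d n Kcheck x h y = 0 then 0
  else (∑ i : Fin n, Kcheck (‖h⁻¹ • (y - x i)‖ ^ 2 / 2))⁻¹ •
    ∑ i : Fin n, Kcheck (‖h⁻¹ • (y - x i)‖ ^ 2 / 2) • (x i - y)

/-- `y` is a mean shift iteration sequence: `y (t+1) = y t + m (y t)` for all `t`. -/
def MSSeq (d n : ℕ) (Kcheck : ℝ → ℝ) (x : Fin n → Euc d) (h : ℝ) (y : ℕ → Euc d) : Prop :=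
  ∀ t : ℕ, y (t + 1) = y t + msMap d n Kcheck x h (y t)

/-- `f` has the Łojasiewicz property on the set `S`. -/
def LojasiewiczOn (d : ℕ) (f : Euc d → ℝ) (S : Set (Euc d)) : Prop :=
  ∃ ε > (0:ℝ), ∃ c > (0:ℝ), ∃ θ ∈ Set.Ico (0:ℝ) 1,
    ∀ x' ∈ S, ∀ x ∈ S, ‖x' - x‖ < ε → 0 ≤ f x' - f x →
      ‖gradient f x‖ ≥ c * (f x' - f x) ^ θ

/-- `f` satisfies the Łojasiewicz inequality at `ybar` with exponent `θ`, on the set `S`. -/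
def LojasiewiczAtWith (d : ℕ) (f : Euc d → ℝ) (S : Set (Euc d)) (ybar : Euc d) (θ : ℝ) : Prop :=
  ∃ ε > (0:ℝ), ∃ c > (0:ℝ),
    ∀ y ∈ S, ‖ybar - y‖ < ε → 0 ≤ f ybar - f y →
      ‖gradient f y‖ ≥ c * (f ybar - f y) ^ θ

lemma ms_finite_ext (a : ℕ → ℝ) (q : ℝ) (hq : 0 < q) (T : ℕ) (B : ℝ)
    (hB : ∀ t, T ≤ t → a t ≤ B * q ^ t) :
    ∃ B' : ℝ, 0 < B' ∧ ∀ t, a t ≤ B' * q ^ t := by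
  refine ⟨|B| + 1 + ∑ s ∈ Finset.range T, |a s| / q ^ s, by positivity, fun t => ?_⟩
  have hqt : 0 < q ^ t := by positivity
  have hs : 0 ≤ ∑ s ∈ Finset.range T, |a s| / q ^ s := by positivity
  by_cases ht : T ≤ t
  · refine (hB t ht).trans ?_
    gcongr
    linarith [le_abs_self B]
  · have h1 : |a t| / q ^ t ≤ ∑ s ∈ Finset.range T, |a s| / q ^ s :=
      Finset.single_le_sum (f := fun s => |a s| / q ^ s) (fun s _ => by positivity)
        (Finset.mem_range.2 (not_le.1 ht))
    rw [← div_le_iff₀ hqt]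
    have h2 : a t / q ^ t ≤ |a t| / q ^ t := by
      gcongr
      exact le_abs_self _
    linarith [abs_nonneg B]

lemma ms_seq {E : Type*} [NormedAddCommGroup E] (y : ℕ → E) (ybar : E)
    (hconv : Tendsto y atTop (𝓝 ybar)) (r : ℕ → ℝ) (hr : ∀ t, 0 ≤ r t)
    (T : ℕ) (q A : ℝ) (hq0 : 0 < q) (hq1 : q < 1) (hA : 0 ≤ A)
    (hdec : ∀ t, T ≤ t → r (t + 1) ≤ q ^ 2 * r t)
    (hstep : ∀ t, T ≤ t → ‖y (t + 1) - y t‖ ≤ A * √(r t)) :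
    ∃ C : ℝ, 0 < C ∧ ∀ t : ℕ, ‖ybar - y t‖ ≤ C * q ^ t ∧ r t ≤ C * q ^ (2 * t) := by
  have hgeo : ∀ t, T ≤ t → r t ≤ (r T / (q ^ 2) ^ T) * (q ^ 2) ^ t := by
    intro t ht
    induction t, ht using Nat.le_induction with
    | base => rw [div_mul_cancel₀]; positivity
    | succ t ht ih =>
      calc r (t + 1) ≤ q ^ 2 * r t := hdec t ht
        _ ≤ q ^ 2 * ((r T / (q ^ 2) ^ T) * (q ^ 2) ^ t) := by gcongr
        _ = _ := by ring
  obtain ⟨B, hB, hrB⟩ := ms_finite_ext r (q ^ 2) (by positivity) T _ hgeo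
  have hD : ∀ t, T ≤ t → ‖y (t + 1) - y t‖ ≤ (A * √B) * q ^ t := by
    intro t ht
    refine (hstep t ht).trans ?_
    rw [mul_assoc]
    refine mul_le_mul_of_nonneg_left ?_ hA
    calc √(r t) ≤ √(B * (q ^ 2) ^ t) := Real.sqrt_le_sqrt (hrB t)
      _ = √B * q ^ t := by
        rw [Real.sqrt_mul hB.le, ← pow_mul, mul_comm 2 t, pow_mul, Real.sqrt_sq (by positivity)]
  obtain ⟨B', hB', hDB⟩ := ms_finite_ext (fun t => ‖y (t + 1) - y t‖) q hq0 T _ hD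
  have h1q : 0 < 1 - q := by linarith
  refine ⟨B + B' / (1 - q), by positivity, fun t => ⟨?_, ?_⟩⟩
  · have := dist_le_of_le_geometric_of_tendsto q B' hq1
      (fun t => by rw [dist_comm, dist_eq_norm]; exact hDB t) hconv t
    rw [dist_comm, dist_eq_norm] at this
    refine this.trans ?_
    have : 0 ≤ B * q ^ t := by positivity
    calc B' * q ^ t / (1 - q) = B' / (1 - q) * q ^ t := by ring
      _ ≤ _ := by rw [add_mul]; linarith
  · refine (hrB t).trans ?_
    rw [← pow_mul]
    gcongr
    have : 0 ≤ B' / (1 - q) := by positivity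
    linarith

lemma ms_sub0 {Khat Kcheck : ℝ → ℝ} (hQM : AssumptionQM Khat Kcheck) (u v : ℝ)
    (hu : 0 ≤ u) (hv : 0 ≤ v) : Khat v - Khat u ≥ -(Kcheck u) * (v - u) := by
  rcases hu.eq_or_lt with rfl | hu
  · rcases hv.eq_or_lt with rfl | hv
    · simp
    have : -(Kcheck 0) ≤ (Khat v - Khat 0) / v := by
      refine le_of_tendsto hQM.rderiv0 ?_
      filter_upwards [Ioo_mem_nhdsGT hv] with w hw
      have := hQM.convexOn.secant_mono (a := 0) (x := w) (y := v) (by simp)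
        hw.1.le hv.le hw.1.ne' hv.ne' hw.2.le
      simpa using this
    rw [le_div_iff₀ hv] at this
    simpa using this
  · exact hQM.subdiff u hu v hv

lemma ms_check_nonneg {Khat Kcheck : ℝ → ℝ} (hQM : AssumptionQM Khat Kcheck) (u : ℝ)
    (hu : 0 ≤ u) : 0 ≤ Kcheck u := by
  have h1 := ms_sub0 hQM u (u + 1) hu (by linarith)
  have h2 := hQM.antitoneOn (show u ∈ Ici (0:ℝ) from hu)
    (show u + 1 ∈ Ici (0:ℝ) from by simp only [mem_Ici]; linarith) (by linarith)
  simp only [add_sub_cancel_left, mul_one] at h1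
  linarith

lemma ms_check_le {Khat Kcheck : ℝ → ℝ} (hQM : AssumptionQM Khat Kcheck) (u : ℝ)
    (hu : 0 ≤ u) : Kcheck u ≤ Kcheck 0 := by
  rcases hu.eq_or_lt with rfl | hu'
  · rfl
  have h1 := ms_sub0 hQM u 0 hu le_rfl
  have h2 := ms_sub0 hQM 0 u le_rfl hu
  have : Kcheck u * u ≤ Kcheck 0 * u := by linarith
  exact le_of_mul_le_mul_right this hu'

lemma ms_gradient {d : ℕ} (f : Euc d → ℝ) (y D : Euc d) (b : ℝ)
    (hf : DifferentiableAt ℝ f y)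
    (hmin : ∀ z, f y + b * (2 * ⟪z - y, D⟫ - ‖z - y‖ ^ 2) ≤ f z) :
    gradient f y = (2 * b) • D := by
  have hg : HasFDerivAt (fun z : Euc d => b * (2 * ⟪z - y, D⟫ - ‖z - y‖ ^ 2))
      (InnerProductSpace.toDual ℝ (Euc d) ((2 * b) • D)) y := by
    have hsub : HasFDerivAt (fun z : Euc d => z - y) (ContinuousLinearMap.id ℝ (Euc d)) y :=
      (hasFDerivAt_id y).sub_const y
    have h1 := (((hsub.inner ℝ (hasFDerivAt_const D y)).const_mul 2).sub hsub.norm_sq).const_mul b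
    refine h1.congr_fderiv ?_
    ext v
    simp [inner_smul_left, real_inner_comm]
    ring
  have hF := hf.hasGradientAt.hasFDerivAt
  have hloc : IsLocalMin (fun z => f z - b * (2 * ⟪z - y, D⟫ - ‖z - y‖ ^ 2)) y := by
    refine Filter.Eventually.of_forall fun z => ?_
    have := hmin z
    simp only [sub_self, inner_zero_left, norm_zero]
    norm_num
    linarith
  have h0 := hloc.hasFDerivAt_eq_zero (hF.sub hg)
  rw [sub_eq_zero] at h0
  exact (InnerProductSpace.toDual ℝ (Euc d)).injective h0

/-- Sum of weights at `z`. -/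
def msW (d n : ℕ) (Kcheck : ℝ → ℝ) (x : Fin n → Euc d) (h : ℝ) (z : Euc d) : ℝ :=
  ∑ i : Fin n, Kcheck (‖h⁻¹ • (z - x i)‖ ^ 2 / 2)

lemma ms_minorant (d n : ℕ) (hn : 0 < n)
    (K : Euc d → ℝ) (Khat Kcheck : ℝ → ℝ)
    (hRS : AssumptionRS d K Khat) (hQM : AssumptionQM Khat Kcheck)
    (x : Fin n → Euc d) (h : ℝ) (hh : 0 < h) (y z : Euc d) :
    KDE d n K x h y + (1 / ((n : ℝ) * h ^ d) / (2 * h ^ 2) * msW d n Kcheck x h y) *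
      (2 * ⟪z - y, msMap d n Kcheck x h y⟫ - ‖z - y‖ ^ 2) ≤ KDE d n K x h z := by
  have hc : 0 < 1 / ((n : ℝ) * h ^ d) := by positivity
  set c := 1 / ((n : ℝ) * h ^ d) with hcdef
  have hV : ∑ i : Fin n, Kcheck (‖h⁻¹ • (y - x i)‖ ^ 2 / 2) • (x i - y)
      = msW d n Kcheck x h y • msMap d n Kcheck x h y := by
    unfold msMap fcheck
    rw [← hcdef]
    by_cases hW : msW d n Kcheck x h y = 0
    · have hW' := hW
      unfold msW at hW'
      rw [Finset.sum_eq_zero_iff_of_nonneg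
        (fun i _ => ms_check_nonneg hQM _ (by positivity))] at hW'
      rw [hW, zero_smul]
      exact Finset.sum_eq_zero fun i hi => by rw [hW' i hi, zero_smul]
    · have : ¬ c * ∑ i : Fin n, Kcheck (‖h⁻¹ • (y - x i)‖ ^ 2 / 2) = 0 :=
        mul_ne_zero hc.ne' hW
      rw [if_neg this]
      change _ = msW d n Kcheck x h y • (msW d n Kcheck x h y)⁻¹ • _
      rw [smul_smul, mul_inv_cancel₀ hW, one_smul]
  have key : ∀ i : Fin n, K (h⁻¹ • (y - x i)) + 1 / (2 * h ^ 2) *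
      (2 * ⟪z - y, Kcheck (‖h⁻¹ • (y - x i)‖ ^ 2 / 2) • (x i - y)⟫
        - Kcheck (‖h⁻¹ • (y - x i)‖ ^ 2 / 2) * ‖z - y‖ ^ 2) ≤ K (h⁻¹ • (z - x i)) := by
    intro i
    have h1 := ms_sub0 hQM (‖h⁻¹ • (y - x i)‖ ^ 2 / 2) (‖h⁻¹ • (z - x i)‖ ^ 2 / 2)
      (by positivity) (by positivity)
    rw [← hRS.radial, ← hRS.radial] at h1
    have h2 : ‖h⁻¹ • (z - x i)‖ ^ 2 / 2 - ‖h⁻¹ • (y - x i)‖ ^ 2 / 2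
        = 1 / (2 * h ^ 2) * (‖z - y‖ ^ 2 - 2 * ⟪z - y, x i - y⟫) := by
      have e : z - x i = (z - y) - (x i - y) := by abel
      rw [norm_smul, norm_smul, mul_pow, mul_pow, e, norm_sub_sq_real, norm_sub_rev y (x i)]
      simp only [norm_inv, Real.norm_eq_abs, inv_pow, sq_abs]
      field_simp
      ring
    rw [h2] at h1
    rw [inner_smul_right]
    linarith
  have hsum := Finset.sum_le_sum fun i (_ : i ∈ Finset.univ) => key i
  rw [Finset.sum_add_distrib, ← Finset.mul_sum, Finset.sum_sub_distrib, ← Finset.mul_sum,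
    ← inner_sum, ← Finset.sum_mul, hV, inner_smul_right] at hsum
  have := mul_le_mul_of_nonneg_left hsum hc.le
  unfold KDE
  rw [← hcdef]
  refine le_trans (le_of_eq ?_) this
  unfold msW
  ring

/-- Linear convergence when `θ = 1/2`: under the assumptions of the convergence
theorem, if moreover `y t → ȳ` and `f` satisfies the Łojasiewicz inequality at `ȳ` with
exponent `θ = 1/2`, then there are `C > 0` and `q ∈ (0,1)` with `‖ȳ − y t‖ ≤ C qᵗ` and
`f(ȳ) − f(y t) ≤ C q^{2t}` for all `t`. -/
theorem ms_linear_convergence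
    (d n : ℕ) (hd : 0 < d) (hn : 0 < n)
    (K : Euc d → ℝ) (Khat Kcheck : ℝ → ℝ)
    (hRS : AssumptionRS d K Khat) (hQM : AssumptionQM Khat Kcheck)
    (x : Fin n → Euc d) (h : ℝ) (hh : 0 < h)
    (y : ℕ → Euc d) (hy : MSSeq d n Kcheck x h y)
    (hy0 : 0 < KDE d n K x h (y 0))
    (τ : ℕ) (S : Set (Euc d))
    (hS : S = closure (convexHull ℝ {z : Euc d | ∃ t : ℕ, τ ≤ t ∧ z = y t}))
    (ha1diff : ∀ z ∈ S, DifferentiableAt ℝ (KDE d n K x h) z)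
    (ha1lip : ∃ L : NNReal, LipschitzOnWith L (gradient (KDE d n K x h)) S)
    (ha2 : LojasiewiczOn d (KDE d n K x h) S)
    (ybar : Euc d) (hconv : Filter.Tendsto y Filter.atTop (nhds ybar))
    (hloja : LojasiewiczAtWith d (KDE d n K x h) S ybar (1/2)) :
    ∃ C : ℝ, 0 < C ∧ ∃ q ∈ Set.Ioo (0:ℝ) 1, ∀ t : ℕ,
      ‖ybar - y t‖ ≤ C * q ^ t ∧
      KDE d n K x h ybar - KDE d n K x h (y t) ≤ C * q ^ (2 * t) := by
  set f := KDE d n K x h with hf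
  set a := 1 / ((n : ℝ) * h ^ d) / (2 * h ^ 2) with ha
  have ha0 : 0 < a := by positivity
  set b : ℕ → ℝ := fun t => a * msW d n Kcheck x h (y t) with hb
  have hb0 : ∀ t, 0 ≤ b t := fun t => mul_nonneg ha0.le
    (Finset.sum_nonneg fun i _ => ms_check_nonneg hQM _ (by positivity))
  have hK0 := ms_check_nonneg hQM 0 le_rfl
  obtain ⟨F, hF0, hbF⟩ : ∃ F : ℝ, 0 < F ∧ ∀ t, b t ≤ F := by
    refine ⟨a * (n * Kcheck 0) + 1, by positivity, fun t => ?_⟩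
    have : msW d n Kcheck x h (y t) ≤ n * Kcheck 0 := by
      have := Finset.sum_le_card_nsmul (Finset.univ : Finset (Fin n))
        (fun i => Kcheck (‖h⁻¹ • (y t - x i)‖ ^ 2 / 2)) (Kcheck 0)
        (fun i _ => ms_check_le hQM _ (by positivity))
      simpa [msW] using this
    have := mul_le_mul_of_nonneg_left this ha0.le
    simp only [hb]
    linarith
  have hΔ : ∀ t, msMap d n Kcheck x h (y t) = y (t + 1) - y t := fun t => by
    rw [hy t]; abel
  have hmin : ∀ t z, f (y t) + b t * (2 * ⟪z - y t, y (t + 1) - y t⟫ - ‖z - y t‖ ^ 2) ≤ f z := by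
    intro t z
    rw [← hΔ t]
    exact ms_minorant d n hn K Khat Kcheck hRS hQM x h hh (y t) z
  have hasc : ∀ t, f (y t) + b t * ‖y (t + 1) - y t‖ ^ 2 ≤ f (y (t + 1)) := by
    intro t
    have := hmin t (y (t + 1))
    rw [real_inner_self_eq_norm_sq] at this
    linarith
  have hmono : Monotone fun t => f (y t) := monotone_nat_of_le_succ fun t => by
    have := hasc t
    have := mul_nonneg (hb0 t) (sq_nonneg ‖y (t + 1) - y t‖)
    linarith
  have hfc : Continuous f := by
    have := hRS.cont
    rw [hf]
    unfold KDE
    fun_prop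
  have hlim : Tendsto (fun t => f (y t)) atTop (𝓝 (f ybar)) :=
    (hfc.tendsto ybar).comp hconv
  have hr : ∀ t, 0 ≤ f ybar - f (y t) := fun t => sub_nonneg.2 (hmono.ge_of_tendsto hlim t)
  have hgrad : ∀ t, τ ≤ t → gradient f (y t) = (2 * b t) • (y (t + 1) - y t) ∧ y t ∈ S := by
    intro t ht
    have hmem : y t ∈ S := by
      rw [hS]
      exact subset_closure (subset_convexHull ℝ _ ⟨t, ht, rfl⟩)
    exact ⟨ms_gradient f (y t) _ (b t) (ha1diff _ hmem) (hmin t), hmem⟩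
  obtain ⟨ε, hε, c, hc, hL⟩ := hloja
  have hev : ∀ᶠ t in atTop, ‖ybar - y t‖ < ε := by
    have := (Metric.tendsto_nhds.1 hconv) ε hε
    filter_upwards [this] with t ht
    rwa [dist_comm, dist_eq_norm] at ht
  obtain ⟨T₀, hT₀⟩ := eventually_atTop.1 hev
  have hmain : ∀ t, max T₀ τ ≤ t →
      c * √(f ybar - f (y t)) ≤ 2 * b t * ‖y (t + 1) - y t‖ := by
    intro t ht
    obtain ⟨hg, hm⟩ := hgrad t ((le_max_right _ _).trans ht)
    have := hL (y t) hm (hT₀ t ((le_max_left _ _).trans ht)) (hr t)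
    rw [hg, norm_smul, Real.norm_of_nonneg (by linarith [hb0 t]), ← Real.sqrt_eq_rpow] at this
    exact this
  set κ := min (c ^ 2 / (4 * F)) (1 / 2) with hκ
  have hκ0 : 0 < κ := lt_min (by positivity) (by norm_num)
  have hκ1 : κ ≤ 1 / 2 := min_le_right _ _
  have hκ2 : κ ≤ c ^ 2 / (4 * F) := min_le_left _ _
  have hq2 : √(1 - κ) ^ 2 = 1 - κ := Real.sq_sqrt (by linarith)
  have hq0 : 0 < √(1 - κ) := Real.sqrt_pos.2 (by linarith)
  have hq1 : √(1 - κ) < 1 := by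
    rw [Real.sqrt_lt' one_pos]; linarith
  obtain ⟨C, hC, hfin⟩ := ms_seq y ybar hconv (fun t => f ybar - f (y t)) hr (max T₀ τ)
    (√(1 - κ)) (2 / c) hq0 hq1 (by positivity) (by
      intro t ht
      rw [hq2]
      have h1 := hmain t ht
      have h2 := hasc t
      have h3 : (c * √(f ybar - f (y t))) ^ 2 ≤ (2 * b t * ‖y (t + 1) - y t‖) ^ 2 :=
        pow_le_pow_left₀ (by positivity) h1 2
      rw [mul_pow, Real.sq_sqrt (hr t)] at h3
      have h4 : (2 * b t * ‖y (t + 1) - y t‖) ^ 2 ≤ 4 * F * (b t * ‖y (t + 1) - y t‖ ^ 2) := by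
        have := mul_le_mul_of_nonneg_right (hbF t)
          (mul_nonneg (hb0 t) (sq_nonneg ‖y (t + 1) - y t‖))
        nlinarith
      have h5 : c ^ 2 / (4 * F) * (f ybar - f (y t)) ≤ b t * ‖y (t + 1) - y t‖ ^ 2 := by
        rw [div_mul_eq_mul_div, div_le_iff₀ (by positivity)]
        linarith
      have h6 := mul_le_mul_of_nonneg_right hκ2 (hr t)
      linarith) (by
      intro t ht
      have h1 := hmain t ht
      have h2 := hasc t
      have h7 := hr (t + 1)
      have hs := Real.sq_sqrt (hr t)
      have hs0 := Real.sqrt_nonneg (f ybar - f (y t))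
      set s := √(f ybar - f (y t)) with hsdef
      set D := ‖y (t + 1) - y t‖ with hD
      have hD0 : 0 ≤ D := norm_nonneg _
      have h8 : b t * D ^ 2 ≤ s ^ 2 := by linarith
      rw [div_mul_eq_mul_div, le_div_iff₀ hc]
      rcases hs0.eq_or_lt with h0 | h0
      · rw [← h0] at h8 ⊢
        rcases (hb0 t).eq_or_lt with hbt | hbt
        · have hW : msW d n Kcheck x h (y t) = 0 := by
            have : a * msW d n Kcheck x h (y t) = 0 := hbt.symm
            exact (mul_eq_zero.1 this).resolve_left ha0.ne'
          have : D = 0 := by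
            rw [hD, ← hΔ t]
            unfold msMap fcheck
            unfold msW at hW
            rw [hW]
            simp
          rw [this]; simp
        · have : D ^ 2 ≤ 0 := by
            by_contra hcon
            have := mul_pos hbt (not_le.1 hcon)
            norm_num at h8
            linarith
          have : D = 0 := by
            have := le_antisymm this (sq_nonneg D)
            exact pow_eq_zero_iff (two_ne_zero) |>.1 this
          rw [this]; simp
      · have h9 : c * s * D ≤ 2 * b t * D * D := mul_le_mul_of_nonneg_right h1 hD0
        have h10 : (D * c) * s ≤ (2 * s) * s := by nlinarith
        exact le_of_mul_le_mul_right h10 h0)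
  exact ⟨C, hC, √(1 - κ), ⟨hq0, hq1⟩, hfin⟩
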